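/- For all ε > 0 and C > 0 there exists K > 0 with the following property: for every integer m ≥ 1 and all univalent maps g_1, ..., g_m : D_ε → ℂ with g_i([-1,1]) = [-1,1] and sup_{D_ε} |g_i - id| ≤ C for each i, there exist radii ε/3 = ρ_m ≥ ρ_{m-1} ≥ ... ≥ ρ_0 with ρ_0 ≥ (ε/3) · exp(-K Σ_{i=1}^m sup_{D_ε} |g_i - id|) such that g_i(D_{ρ_{i-1}}) ⊆ D_{ρ_i} for every i = 1, ..., m. In particular the composition g_m ∘ ⋯ ∘ g_1 is well-defined on D_{ρ_0} and maps D_{ρ_0} into D_{ε/3}. -/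

import Mathlib

/-!
If `g` preserves a set `S` and moves the points of its `ε`-thickening by at most `s`, then on the
ball of radius `ε` about any `x ∈ S` the map `g - id` stays within `2 s` of its value at `x`. The
Schwarz lemma gives `|g z - g x| ≤ (1 + (2 / ε) s) |z - x|` there, and since `g x ∈ S`, the map `g`
enlarges the radius of a thickening of `S` at most by the factor
`1 + (2 / ε) s ≤ exp ((2 / ε) s)`. Dividing the final radius successively by these exponentials
yields the radii, with `K = 2 / ε`.
-/

/-- The interval `[-1,1]` viewed as a subset of `ℂ`. -/
noncomputable def realSeg : Set ℂ := (fun x : ℝ => (x : ℂ)) '' Set.Icc (-1 : ℝ) 1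

/-- The `a`-stadium: points at distance `< a` from `[-1,1]`. -/
noncomputable def stadium (a : ℝ) : Set ℂ := {z : ℂ | Metric.infDist z realSeg < a}

open Metric Set

theorem le_cbiSup_of_mem {α β : Type*} [ConditionallyCompleteLattice β] {f : α → β} {s : Set α}
    (hf : BddAbove (f '' s)) {x : α} (hx : x ∈ s) : f x ≤ ⨆ y ∈ s, f y := by
  refine le_ciSup₂ (f := fun y (_ : y ∈ s) => f y) (hf.mono ?_) x hx
  exact iUnion_subset fun y => range_subset_iff.2 (mem_image_of_mem f)

section ChainRadius

/-- The `i`-th radius of a chain of `m` steps ending at the radius `R`, in which the `j`-th step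
multiplies the radius by `exp (a j)`. It is prescribed at the end of the chain, hence the sum over
the steps that remain; for `i ≥ m` it is `R`. -/
noncomputable def chainRadius (R : ℝ) (a : ℕ → ℝ) (m i : ℕ) : ℝ :=
  R * Real.exp (-∑ j ∈ Finset.Ico i m, a j)

variable {R : ℝ} {a : ℕ → ℝ} {m i : ℕ}

theorem chainRadius_self (R : ℝ) (a : ℕ → ℝ) (m : ℕ) : chainRadius R a m m = R := by
  simp [chainRadius]

theorem chainRadius_zero (R : ℝ) (a : ℕ → ℝ) (m : ℕ) :
    chainRadius R a m 0 = R * Real.exp (-∑ j ∈ Finset.range m, a j) := by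
  rw [chainRadius, Finset.range_eq_Ico]

theorem chainRadius_nonneg (hR : 0 ≤ R) : 0 ≤ chainRadius R a m i :=
  mul_nonneg hR (Real.exp_nonneg _)

theorem chainRadius_succ (hi : i < m) :
    chainRadius R a m (i + 1) = Real.exp (a i) * chainRadius R a m i := by
  rw [chainRadius, chainRadius, Finset.sum_eq_sum_Ico_succ_bot hi, neg_add, Real.exp_add,
    Real.exp_neg (a i)]
  field_simp

theorem monotone_chainRadius (hR : 0 ≤ R) (ha : ∀ j, 0 ≤ a j) : Monotone (chainRadius R a m) := by
  intro i j hij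
  have hsum : ∑ k ∈ Finset.Ico j m, a k ≤ ∑ k ∈ Finset.Ico i m, a k :=
    Finset.sum_le_sum_of_subset_of_nonneg (Finset.Ico_subset_Ico_left hij) fun k _ _ => ha k
  unfold chainRadius
  gcongr

end ChainRadius

section Displacement

variable {E : Type*} [NormedAddCommGroup E] [NormedSpace ℂ E] {S : Set E} {g : E → E}
  {x z : E} {ε s r : ℝ}

theorem dist_map_le_of_forall_mem_ball_dist_le (hd : DifferentiableOn ℂ g (ball x ε))
    (hg : ∀ w ∈ ball x ε, dist (g w) w ≤ s) (hz : z ∈ ball x ε) :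
    dist (g z) (g x) ≤ (1 + 2 / ε * s) * dist z x := by
  have hx : x ∈ ball x ε := mem_ball_self (pos_of_mem_ball hz)
  have hmaps : MapsTo (fun w => g w - w) (ball x ε) (closedBall (g x - x) (2 * s)) := by
    intro w hw
    calc dist (g w - w) (g x - x) ≤ ‖g w - w‖ + ‖g x - x‖ := dist_le_norm_add_norm _ _
      _ ≤ s + s := by simpa only [dist_eq_norm] using add_le_add (hg w hw) (hg x hx)
      _ = 2 * s := (two_mul s).symm
  have hosc : dist (g z - z) (g x - x) ≤ 2 * s / ε * dist z x :=
    Complex.dist_le_div_mul_dist_of_mapsTo_ball (hd.sub differentiableOn_id) hmaps hz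
  calc dist (g z) (g x) = dist (g z - z + z) (g x - x + x) := by simp only [sub_add_cancel]
    _ ≤ dist (g z - z) (g x - x) + dist z x := dist_add_add_le _ _ _ _
    _ ≤ 2 * s / ε * dist z x + dist z x := by gcongr
    _ = (1 + 2 / ε * s) * dist z x := by ring

theorem mapsTo_thickening_of_forall_dist_le (hd : DifferentiableOn ℂ g (thickening ε S))
    (hS : MapsTo g S S) (hg : ∀ w ∈ thickening ε S, dist (g w) w ≤ s) (hr : r ≤ ε) :
    MapsTo g (thickening r S) (thickening ((1 + 2 / ε * s) * r) S) := by
  intro z hz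
  obtain ⟨x, hxS, hzx⟩ := mem_thickening_iff.1 hz
  have hball : ball x ε ⊆ thickening ε S := ball_subset_thickening hxS ε
  have hzε : z ∈ ball x ε := hzx.trans_le hr
  have hε : 0 < ε := pos_of_mem_ball hzε
  have hs : 0 ≤ s := dist_nonneg.trans (hg z (hball hzε))
  refine mem_thickening_iff.2 ⟨g x, hS hxS, ?_⟩
  calc dist (g z) (g x) ≤ (1 + 2 / ε * s) * dist z x :=
        dist_map_le_of_forall_mem_ball_dist_le (hd.mono hball) (fun w hw => hg w (hball hw)) hzε
    _ < (1 + 2 / ε * s) * r := by gcongr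

end Displacement

theorem stmt9_general {E : Type*} [NormedAddCommGroup E] [NormedSpace ℂ E] {S : Set E} {ε R : ℝ}
    (hε : 0 < ε) (hR : 0 ≤ R) (hRε : R ≤ ε) {m : ℕ} {g : ℕ → E → E}
    (hd : ∀ i < m, DifferentiableOn ℂ (g i) (thickening ε S)) (hS : ∀ i < m, MapsTo (g i) S S)
    (hg : ∀ i < m, BddAbove ((fun z => dist (g i z) z) '' thickening ε S)) :
    ∃ ρ : ℕ → ℝ, ρ m = R ∧ Monotone ρ ∧
      ρ 0 = R * Real.exp
        (-(2 / ε * ∑ i ∈ Finset.range m, ⨆ z ∈ thickening ε S, dist (g i z) z)) ∧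
      ∀ i < m, MapsTo (g i) (thickening (ρ i) S) (thickening (ρ (i + 1)) S) := by
  let a : ℕ → ℝ := fun i => 2 / ε * ⨆ z ∈ thickening ε S, dist (g i z) z
  have ha (i : ℕ) : 0 ≤ a i := mul_nonneg (by positivity)
    (Real.iSup_nonneg fun _ => Real.iSup_nonneg fun _ => dist_nonneg)
  have hmono : Monotone (chainRadius R a m) := monotone_chainRadius hR ha
  refine ⟨chainRadius R a m, chainRadius_self R a m, hmono, ?_, fun i hi => ?_⟩
  · rw [chainRadius_zero, Finset.mul_sum]
  · have hiε : chainRadius R a m i ≤ ε :=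
      (hmono hi.le).trans ((chainRadius_self R a m).trans_le hRε)
    have hfactor : (1 + a i) * chainRadius R a m i ≤ chainRadius R a m (i + 1) := by
      rw [chainRadius_succ hi, add_comm]
      exact mul_le_mul_of_nonneg_right (Real.add_one_le_exp _) (chainRadius_nonneg hR)
    exact (mapsTo_thickening_of_forall_dist_le (hd i hi) (hS i hi)
      (fun _ hw => le_cbiSup_of_mem (hg i hi) hw) hiε).mono_right (thickening_mono hfactor S)

theorem stadium_eq_thickening (a : ℝ) : stadium a = thickening a realSeg := by
  have hne : realSeg.Nonempty := (nonempty_Icc.2 (by norm_num)).image _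
  ext z
  exact (mem_thickening_iff_infDist_lt hne).symm

/-- **Chain estimate for compositions of univalent maps near the identity.**
For all `ε > 0`, `C > 0` there is `K > 0` such that for univalent maps
`g_1, …, g_m : D_ε → ℂ` with `g_i([-1,1]) = [-1,1]` and `sup_{D_ε}|g_i - id| ≤ C`, there
are radii `ε/3 = ρ_m ≥ … ≥ ρ_0 ≥ (ε/3)·exp(-K Σ_i sup_{D_ε}|g_i - id|)` with
`g_i(D_{ρ_{i-1}}) ⊆ D_{ρ_i}` for all `i`.  (Maps are indexed here by `0, …, m-1`, so
`g i` maps `D_{ρ i}` into `D_{ρ (i+1)}`.) -/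
theorem stmt9 (ε C : ℝ) (hε : 0 < ε) (hC : 0 < C) :
    ∃ K : ℝ, 0 < K ∧
      ∀ (m : ℕ), 1 ≤ m → ∀ g : ℕ → ℂ → ℂ,
        (∀ i < m, DifferentiableOn ℂ (g i) (stadium ε) ∧ Set.InjOn (g i) (stadium ε) ∧
            g i '' realSeg = realSeg ∧ ∀ z ∈ stadium ε, dist (g i z) z ≤ C) →
        ∃ ρ : ℕ → ℝ,
          ρ m = ε / 3 ∧
          (∀ i < m, ρ i ≤ ρ (i + 1)) ∧
          (ε / 3) * Real.exp (-(K * ∑ i ∈ Finset.range m, ⨆ z ∈ stadium ε, dist (g i z) z))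
            ≤ ρ 0 ∧
          ∀ i < m, g i '' stadium (ρ i) ⊆ stadium (ρ (i + 1)) := by
  refine ⟨2 / ε, by positivity, fun m _ g hg => ?_⟩
  simp only [stadium_eq_thickening] at hg ⊢
  obtain ⟨ρ, hρm, hmono, hρ0, hmaps⟩ := stmt9_general hε (R := ε / 3) (by linarith) (by linarith)
    (fun i hi => (hg i hi).1) (fun i hi => mapsTo_iff_image_subset.2 (hg i hi).2.2.1.subset)
    (fun i hi => ⟨C, forall_mem_image.2 (hg i hi).2.2.2⟩)
  exact ⟨ρ, hρm, fun i _ => hmono i.le_succ, hρ0.ge, fun i hi => (hmaps i hi).image_subset⟩
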